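/- Let A and B be finite subsets of a commutative semigroup (G,+). Then there exist a constant c > 0 and a polynomial p such that for all integers n > c, the cardinality |n*A + B| equals p(n). -/

import Mathlib

open Pointwise

/-- The `n`-fold sumset `n*A = {a₁+⋯+a_n : aᵢ ∈ A}` in a (commutative) semigroup,
defined for `n ≥ 1` (the value at `n = 0` is an irrelevant junk value `∅`). -/
def nmulSet {G : Type*} [Add G] (A : Set G) : ℕ → Set G
  | 0 => ∅
  | 1 => A
  | n + 2 => nmulSet A (n + 1) + A

/-- eventually polynomial sequences -/
def EvPoly (f : ℕ → ℚ) : Prop :=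
  ∃ p : Polynomial ℚ, ∃ c : ℕ, ∀ n, c < n → f n = p.eval (n : ℚ)

theorem exists_antidiff (p : Polynomial ℚ) :
    ∃ q : Polynomial ℚ, ∀ x : ℚ, q.eval (x + 1) - q.eval x = p.eval x := by
  induction p using Polynomial.induction_on' with
  | add p q hp hq =>
    obtain ⟨P, hP⟩ := hp
    obtain ⟨Q, hQ⟩ := hq
    refine ⟨P + Q, fun x => ?_⟩
    simp only [Polynomial.eval_add, ← hP, ← hQ]
    ring
  | monomial n a =>
    refine ⟨Polynomial.C (a / (n + 1)) * Polynomial.bernoulli (n + 1), fun x => ?_⟩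
    have h := Polynomial.bernoulli_eval_one_add (n + 1) x
    have hn : (n + 1 : ℚ) ≠ 0 := by positivity
    rw [add_comm] at h
    simp only [Polynomial.eval_mul, Polynomial.eval_C, Polynomial.eval_monomial, h]
    push_cast
    field_simp
    ring

theorem EvPoly.add {f g : ℕ → ℚ} (hf : EvPoly f) (hg : EvPoly g) :
    EvPoly (fun n => f n + g n) := by
  obtain ⟨p, c, hp⟩ := hf
  obtain ⟨q, d, hq⟩ := hg
  refine ⟨p + q, max c d, fun n hn => ?_⟩
  simp only [Polynomial.eval_add]
  rw [hp n (by omega), hq n (by omega)]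

theorem EvPoly.sum {ι : Type*} (s : Finset ι) (f : ι → ℕ → ℚ) (hf : ∀ i ∈ s, EvPoly (f i)) :
    EvPoly (fun n => ∑ i ∈ s, f i n) := by
  classical
  induction s using Finset.induction_on with
  | empty => exact ⟨0, 0, by simp⟩
  | insert a s ha ih =>
    simp only [Finset.sum_insert ha]
    exact (hf a (by simp)).add (ih fun i hi => hf i (by simp [hi]))

/-- `f (n+1) = g (n+1) + h n`. -/
theorem EvPoly.step {f g h : ℕ → ℚ} (hg : EvPoly g) (hh : EvPoly h)
    (H : ∀ n, f (n + 1) = g (n + 1) + h n) : EvPoly f := by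
  obtain ⟨p, c, hp⟩ := hg
  obtain ⟨q, d, hq⟩ := hh
  refine ⟨p + q.comp (Polynomial.X - 1), max c d + 1, fun n hn => ?_⟩
  obtain ⟨m, rfl⟩ : ∃ m, n = m + 1 := ⟨n - 1, by omega⟩
  rw [H, hp _ (by omega), hq _ (by omega)]
  simp

theorem EvPoly.of_rec {f g : ℕ → ℚ} (hg : EvPoly g)
    (H : ∀ n, f (n + 1) = g (n + 1) + f n) : EvPoly f := by
  obtain ⟨p, c, hp⟩ := hg
  obtain ⟨q, hq⟩ := exists_antidiff (p.comp (Polynomial.X + 1))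
  refine ⟨q + Polynomial.C (f c - q.eval (c : ℚ)), c, fun n hn => ?_⟩
  induction n, hn.le using Nat.le_induction with
  | base => omega
  | succ m hm ih =>
    have h1 := hq m
    simp only [Polynomial.eval_comp, Polynomial.eval_add, Polynomial.eval_X,
      Polynomial.eval_one] at h1
    have h2 : f m = (q + Polynomial.C (f c - q.eval (c : ℚ))).eval (m : ℚ) := by
      rcases hm.eq_or_lt with rfl | hlt
      · simp
      · exact ih hlt
    rw [H, h2, hp _ hn]
    push_cast
    simp only [Polynomial.eval_add, Polynomial.eval_C]
    linarith

/-- degree-`n` part of a set of exponent vectors -/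
def lev {k : ℕ} (L : Set (Fin k → ℕ)) (n : ℕ) : Set (Fin k → ℕ) := {x | x ∈ L ∧ ∑ i, x i = n}

theorem lev_finite {k : ℕ} (L : Set (Fin k → ℕ)) (n : ℕ) : (lev L n).Finite := by
  refine (Set.finite_Iic (fun _ : Fin k => n)).subset ?_
  rintro x ⟨-, hx⟩ i
  rw [← hx]
  exact Finset.single_le_sum (f := x) (fun _ _ => Nat.zero_le _) (Finset.mem_univ i)

theorem lev_rec {k : ℕ} (L : Set (Fin (k + 1) → ℕ)) (n : ℕ) :
    (lev L (n + 1)).ncard = (lev {y : Fin k → ℕ | Fin.cons 0 y ∈ L} (n + 1)).ncard +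
      (lev {x : Fin (k + 1) → ℕ | x + (Pi.single 0 1 : Fin (k + 1) → ℕ) ∈ L} n).ncard := by
  have hinj1 : Function.Injective (fun y : Fin k → ℕ => (Fin.cons 0 y : Fin (k + 1) → ℕ)) :=
    Fin.cons_right_injective (α := fun _ => ℕ) 0
  have hinj2 : Function.Injective
      (fun x : Fin (k + 1) → ℕ => x + (Pi.single 0 1 : Fin (k + 1) → ℕ)) :=
    add_left_injective _
  rw [← Set.ncard_image_of_injective _ hinj1, ← Set.ncard_image_of_injective (lev {x : Fin (k + 1) → ℕ | x + (Pi.single 0 1 : Fin (k + 1) → ℕ) ∈ L} n) hinj2,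
    ← Set.ncard_union_eq _ ((lev_finite _ _).image _) ((lev_finite _ _).image _)]
  · congr 1
    ext x
    constructor
    · rintro ⟨hx, hs⟩
      rcases Nat.eq_zero_or_pos (x 0) with h0 | h0
      · left
        have hc : (Fin.cons 0 (Fin.tail x) : Fin (k + 1) → ℕ) = x := by
          conv_rhs => rw [← Fin.cons_self_tail x, h0]
        refine ⟨Fin.tail x, ⟨?_, ?_⟩, hc⟩
        · simpa [hc] using hx
        · rw [Fin.sum_univ_succ, h0, zero_add] at hs
          exact hs
      · right
        have hc : (x - Pi.single 0 1) + (Pi.single 0 1 : Fin (k + 1) → ℕ) = x := by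
          refine tsub_add_cancel_of_le ?_
          intro i
          by_cases hi : i = 0
          · subst hi; simp; omega
          · simp [hi]
        refine ⟨x - Pi.single 0 1, ⟨?_, ?_⟩, hc⟩
        · simpa [hc] using hx
        · rw [← hc] at hs
          simp only [Pi.add_apply, Finset.sum_add_distrib, Finset.sum_pi_single',
            Finset.mem_univ, if_true] at hs
          simpa using hs
    · rintro (⟨y, ⟨hy, hs⟩, rfl⟩ | ⟨y, ⟨hy, hs⟩, rfl⟩)
      · exact ⟨hy, by simpa [Fin.sum_univ_succ] using hs⟩
      · exact ⟨hy, by simp [Finset.sum_add_distrib, hs]⟩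
  · rw [Set.disjoint_left]
    rintro _ ⟨y, -, rfl⟩ ⟨z, -, hz⟩
    have := congrFun hz 0
    simp at this

theorem evPoly_lev (k : ℕ) : ∀ L : Set (Fin k → ℕ), IsLowerSet L →
    EvPoly (fun n => ((lev L n).ncard : ℚ)) := by
  induction k with
  | zero =>
    intro L _
    refine ⟨0, 0, fun n hn => ?_⟩
    have : lev L n = ∅ := by
      ext x
      simp [lev]
      intro _; omega
    simp [this]
  | succ k ih =>
    intro L hL
    let S : ℕ → Set (Fin (k + 1) → ℕ) := fun t => {x | x + Pi.single 0 t ∈ L}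
    have hSl : ∀ t, IsLowerSet (S t) := fun t x y hyx hx =>
      hL (by gcongr) hx
    have hanti : Antitone S := by
      intro s t hst x hx
      refine hL ?_ hx
      gcongr
    have hstab : ∃ T, S (T + 1) = S T := by
      by_contra! hne
      have : ∀ t, ∃ x, x ∈ S t ∧ x ∉ S (t + 1) := by
        intro t
        by_contra! h
        exact hne t (Set.Subset.antisymm (hanti (Nat.le_succ t)) h)
      choose x hx hx' using this
      obtain ⟨i, j, hij, hle⟩ := wellQuasiOrdered_le x
      exact hx' i (hSl _ hle (hanti hij (hx j)))
    have hrec : ∀ t n, ((lev (S t) (n + 1)).ncard : ℚ) =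
        ((lev {y : Fin k → ℕ | Fin.cons 0 y ∈ S t} (n + 1)).ncard : ℚ) +
          ((lev (S (t + 1)) n).ncard : ℚ) := by
      intro t n
      rw [lev_rec (S t) n]
      have : {x : Fin (k + 1) → ℕ | x + Pi.single 0 1 ∈ S t} = S (t + 1) := by
        ext x
        simp only [S, Set.mem_ofPred_eq, add_assoc, ← Pi.single_add, add_comm 1 t]
      rw [this]
      push_cast
      rfl
    have hslice : ∀ t, EvPoly
        (fun n => ((lev {y : Fin k → ℕ | Fin.cons 0 y ∈ S t} n).ncard : ℚ)) := by
      intro t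
      refine ih _ ?_
      intro x y hyx hx
      refine hSl t ?_ hx
      exact Fin.cons_le_cons.2 ⟨le_rfl, hyx⟩
    obtain ⟨T, hT⟩ := hstab
    have hTp : EvPoly (fun n => ((lev (S T) n).ncard : ℚ)) := by
      refine EvPoly.of_rec (hslice T) (fun n => ?_)
      have := hrec T n
      rwa [hT] at this
    have hdown : ∀ d, d ≤ T → EvPoly (fun n => ((lev (S (T - d)) n).ncard : ℚ)) := by
      intro d
      induction d with
      | zero => intro _; simpa using hTp
      | succ d ihd =>
        intro hd
        refine EvPoly.step (hslice (T - (d + 1))) (ihd (by omega)) (fun n => ?_)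
        have := hrec (T - (d + 1)) n
        rwa [show T - (d + 1) + 1 = T - d by omega] at this
    have h0 := hdown T le_rfl
    have hS0 : S 0 = L := by
      ext x
      simp [S]
    rw [Nat.sub_self, hS0] at h0
    exact h0

/-- the set of values in degree `n` -/
theorem evPoly_image {M : Type*} [AddCommMonoid M] {k m : ℕ} (a : Fin k → M) (b : Fin m → M) :
    EvPoly (fun n => (Set.ncard {y : M | ∃ (x : Fin k → ℕ) (j : Fin m),
      ∑ i, x i = n ∧ ∑ i, x i • a i + b j = y} : ℚ)) := by
  classical
  let φ : (Fin k → ℕ) → Fin m → M := fun x j => ∑ i, x i • a i + b j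
  have hφ : ∀ x z j, φ (x + z) j = φ x j + ∑ i, z i • a i := by
    intro x z j
    simp only [φ, Pi.add_apply, add_smul, Finset.sum_add_distrib]
    abel
  let key : (Fin k → ℕ) → Fin m → (Lex (Fin k → ℕ)) ×ₗ Fin m := fun x j => toLex (toLex x, j)
  let L : Fin m → Set (Fin k → ℕ) := fun j =>
    {x | ∀ x' j', ∑ i, x' i = ∑ i, x i → φ x' j' = φ x j → key x j ≤ key x' j'}
  have hL : ∀ j, IsLowerSet (L j) := by
    intro j x y hyx hx x' j' hs he
    obtain ⟨z, rfl⟩ := exists_add_of_le hyx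
    have h1 := hx (x' + z) j' (by simp [Finset.sum_add_distrib, hs]) (by rw [hφ, hφ, he])
    simp only [key, Prod.Lex.toLex_le_toLex] at h1 ⊢
    rcases h1 with h1 | ⟨h1, h2⟩
    · left
      rw [toLex_add, toLex_add] at h1
      exact lt_of_add_lt_add_right h1
    · right
      refine ⟨?_, h2⟩
      rw [toLex_add, toLex_add] at h1
      exact add_right_cancel h1
  have hsum := EvPoly.sum Finset.univ (fun j n => ((lev (L j) n).ncard : ℚ))
    (fun j _ => evPoly_lev k _ (hL j))
  convert hsum using 2 with n
  rw [← Nat.cast_sum]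
  congr 1
  let F : Finset ((_ : Fin m) × (Fin k → ℕ)) :=
    Finset.univ.sigma (fun j => (lev_finite (L j) n).toFinset)
  have hF : F.card = ∑ j, (lev (L j) n).ncard := by
    rw [Finset.card_sigma]
    refine Finset.sum_congr rfl fun j _ => ?_
    rw [Set.ncard_eq_toFinset_card _ (lev_finite (L j) n)]
  have hmem : ∀ p, p ∈ F ↔ p.2 ∈ L p.1 ∧ ∑ i, p.2 i = n := by
    intro p
    simp [F, lev]
  rw [← hF, ← Set.ncard_coe_finset]
  have hinj : Set.InjOn (fun p : (_ : Fin m) × (Fin k → ℕ) => φ p.2 p.1) (F : Set _) := by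
    rintro ⟨j, x⟩ hp ⟨j', x'⟩ hp' he
    rw [Finset.mem_coe, hmem] at hp hp'
    have h1 := hp.1 x' j' (hp'.2.trans hp.2.symm) he.symm
    have h2 := hp'.1 x j (hp.2.trans hp'.2.symm) he
    have h3 := le_antisymm h1 h2
    have h4 := toLex.injective h3
    rw [Prod.mk.injEq] at h4
    obtain ⟨h5, h6⟩ := h4
    have h7 := toLex.injective h5
    simp only at h6 h7
    subst h6 h7
    rfl
  rw [← Set.InjOn.ncard_image hinj]
  congr 1
  ext y
  constructor
  · rintro ⟨x, j, hs, he⟩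
    let W : Set ((Lex (Fin k → ℕ)) ×ₗ Fin m) :=
      {q | ∃ x j, q = key x j ∧ ∑ i, x i = n ∧ φ x j = y}
    have hW : W.Nonempty := ⟨key x j, x, j, rfl, hs, he⟩
    obtain ⟨q, ⟨x0, j0, rfl, hs0, he0⟩, hmin⟩ :=
      WellFounded.has_min (wellFounded_lt (α := (Lex (Fin k → ℕ)) ×ₗ Fin m)) W hW
    refine ⟨⟨j0, x0⟩, ?_, he0⟩
    rw [Finset.mem_coe, hmem]
    refine ⟨fun x' j' hs' he' => ?_, hs0⟩
    exact not_lt.1 (hmin _ ⟨x', j', rfl, hs'.trans hs0, he'.trans he0⟩)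
  · rintro ⟨⟨j, x⟩, hp, rfl⟩
    rw [Finset.mem_coe, hmem] at hp
    exact ⟨x, j, hp.2, rfl⟩

theorem mem_nmulSet_iff {G : Type*} [AddCommSemigroup G] {k : ℕ} (a : Fin k → G) (n : ℕ)
    (y : WithZero G) :
    (∃ g ∈ nmulSet (Set.range a) (n + 1), (g : WithZero G) = y) ↔
      ∃ x : Fin k → ℕ, ∑ i, x i = n + 1 ∧ ∑ i, x i • (a i : WithZero G) = y := by
  classical
  have hsingle : ∀ i, ∑ l, (Pi.single i 1 : Fin k → ℕ) l • (a l : WithZero G) = a i := by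
    intro i
    rw [Finset.sum_eq_single i]
    · simp
    · intro l _ hl
      simp [hl]
    · simp
  have hex : ∀ (n : ℕ) (x : Fin k → ℕ), ∑ i, x i = n + 1 →
      ∃ (i : Fin k) (z : Fin k → ℕ), x = z + Pi.single i 1 ∧ ∑ l, z l = n := by
    intro n x hx
    have : ∃ i, x i ≠ 0 := by
      by_contra! h
      simp [h] at hx
    obtain ⟨i, hi⟩ := this
    have hc : (x - Pi.single i 1) + (Pi.single i 1 : Fin k → ℕ) = x := by
      refine tsub_add_cancel_of_le ?_
      intro l
      by_cases hl : l = i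
      · subst hl; simp; omega
      · simp [hl]
    refine ⟨i, x - Pi.single i 1, hc.symm, ?_⟩
    rw [← hc] at hx
    simp only [Pi.add_apply, Finset.sum_add_distrib, Finset.sum_pi_single',
      Finset.mem_univ, if_true] at hx
    simpa using hx
  induction n generalizing y with
  | zero =>
    constructor
    · rintro ⟨g, ⟨i, rfl⟩, rfl⟩
      exact ⟨Pi.single i 1, by simp, hsingle i⟩
    · rintro ⟨x, hx, rfl⟩
      obtain ⟨i, z, rfl, hz⟩ := hex 0 x hx
      have hz0 : z = 0 := by
        ext l
        have := Finset.sum_eq_zero_iff.1 hz l (Finset.mem_univ l)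
        simpa using this
      subst hz0
      refine ⟨a i, ⟨i, rfl⟩, ?_⟩
      rw [zero_add, hsingle]
  | succ n ih =>
    constructor
    · rintro ⟨g, ⟨u, hu, _, ⟨i, rfl⟩, rfl⟩, rfl⟩
      obtain ⟨x, hx, he⟩ := (ih (u : WithZero G)).1 ⟨u, hu, rfl⟩
      refine ⟨x + Pi.single i 1, by simp [Finset.sum_add_distrib, hx], ?_⟩
      simp only [Pi.add_apply, add_smul, Finset.sum_add_distrib, hsingle, he]
      simp
    · rintro ⟨x, hx, rfl⟩
      obtain ⟨i, z, rfl, hz⟩ := hex (n + 1) x hx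
      obtain ⟨u, hu, he⟩ := (ih (∑ l, z l • (a l : WithZero G))).2 ⟨z, hz, rfl⟩
      refine ⟨u + a i, ⟨u, hu, a i, ⟨i, rfl⟩, rfl⟩, ?_⟩
      simp only [Pi.add_apply, add_smul, Finset.sum_add_distrib, hsingle, ← he]
      simp

/-- Khovanskiĭ. Let `A` and `B` be finite subsets of a commutative
semigroup `(G,+)`. Then there exist a constant `c > 0` and a polynomial `p` such that
for all integers `n > c`, the cardinality `|n*A + B|` equals `p(n)`. -/
theorem card_affine_sumset_eventually_polynomial
    {G : Type*} [AddCommSemigroup G] (A B : Set G) (hA : A.Finite) (hB : B.Finite) :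
    ∃ c : ℕ, 0 < c ∧ ∃ p : Polynomial ℝ, ∀ n : ℕ, c < n →
      ((nmulSet A n + B).ncard : ℝ) = p.eval (n : ℝ) := by
  obtain ⟨k, a, -, rfl⟩ := hA.fin_param
  obtain ⟨m, b, -, rfl⟩ := hB.fin_param
  obtain ⟨p, c, hp⟩ := evPoly_image (fun i => (a i : WithZero G)) (fun j => (b j : WithZero G))
  refine ⟨c + 1, by omega, p.map (algebraMap ℚ ℝ), fun n hn => ?_⟩
  have h := hp n (by omega)
  obtain ⟨n, rfl⟩ : ∃ l, n = l + 1 := ⟨n - 1, by omega⟩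
  have hset : {y : WithZero G | ∃ (x : Fin k → ℕ) (j : Fin m),
      ∑ i, x i = n + 1 ∧ ∑ i, x i • (a i : WithZero G) + (b j : WithZero G) = y} =
      (fun g : G => (g : WithZero G)) '' (nmulSet (Set.range a) (n + 1) + Set.range b) := by
    ext y
    constructor
    · rintro ⟨x, j, hs, rfl⟩
      obtain ⟨u, hu, he⟩ := (mem_nmulSet_iff a n _).2 ⟨x, hs, rfl⟩
      refine ⟨u + b j, ⟨u, hu, b j, ⟨j, rfl⟩, rfl⟩, ?_⟩
      rw [← he]
      simp
    · rintro ⟨_, ⟨u, hu, _, ⟨j, rfl⟩, rfl⟩, rfl⟩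
      obtain ⟨x, hx, he⟩ := (mem_nmulSet_iff a n _).1 ⟨u, hu, rfl⟩
      refine ⟨x, j, hx, ?_⟩
      rw [he]
      simp
  have hinj : Function.Injective (fun g : G => (g : WithZero G)) := WithZero.coe_injective
  beta_reduce at h
  rw [hset, Set.ncard_image_of_injective _ hinj] at h
  have h' := congrArg (algebraMap ℚ ℝ) h
  rw [← Polynomial.eval_map_apply] at h'
  simpa using h'
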